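/- arXiv:2311.13582 — 2 statements merged into one kernel-verified Lean document; each statement's English description precedes it below -/
import Mathlib

section
/- The four-color Ramsey number satisfies R(C_4, K_3, K_3, K_3) ≤ 57; that is, every coloring of the edges of the complete graph on 57 vertices with colors 1, 2, 3, 4 contains a cycle of length 4 in color 1 or a triangle in one of the colors 2, 3, 4. -/
open SimpleGraph

/-- A graph bundled with its vertex type. -/
structure VGraph : Type 1 where
  V : Type
  G : SimpleGraph V

/-- The cycle `C₄` as a bundled graph. -/
def C4 : VGraph := ⟨Fin 4, SimpleGraph.cycleGraph 4⟩

/-- The path `P₃` (on 3 vertices) as a bundled graph. -/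
def P3 : VGraph := ⟨Fin 3, SimpleGraph.pathGraph 3⟩

/-- The complete graph `K_k` as a bundled graph. -/
def Kc (k : ℕ) : VGraph := ⟨Fin k, ⊤⟩

/-- The star `K_{1,k}`: vertex `0` is the center, joined to the `k` leaves. -/
def starGraph (k : ℕ) : SimpleGraph (Fin (k + 1)) :=
  SimpleGraph.fromRel (fun u _ => u = 0)

/-- The book `B_k = K₂ + kK₁`: vertices `0, 1` form the spine, joined
to everything; the `k` pages are pairwise nonadjacent. -/
def bookGraph (k : ℕ) : SimpleGraph (Fin (k + 2)) :=
  SimpleGraph.fromRel (fun u _ => u.val < 2)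

/-- Deletion of a vertex (with all incident edges) from a bundled graph. -/
def VGraph.delete (X : VGraph) (w : X.V) : VGraph :=
  ⟨{v : X.V // v ≠ w}, X.G.induce {v | v ≠ w}⟩

/-- Disjoint union with a single isolated vertex, `G ∪ K₁`. -/
def VGraph.addK1 (X : VGraph) : VGraph :=
  ⟨Option X.V, SimpleGraph.fromRel (fun u v => ∃ a b, u = some a ∧ v = some b ∧ X.G.Adj a b)⟩

/-- `ramseyProp l N` : every coloring of the edges of the complete graph on `N`
vertices with `l.length` colors admits, for some color `i`, a subgraph isomorphic
to the `i`-th graph of `l` all of whose edges have color `i`. -/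
def ramseyProp (l : List VGraph) (N : ℕ) : Prop :=
  ∀ c : Sym2 (Fin N) → Fin l.length,
    ∃ (i : Fin l.length) (f : (l.get i).V ↪ Fin N),
      ∀ u v, (l.get i).G.Adj u v → c s(f u, f v) = i

/-- The Ramsey number of a list of graphs: the least positive `N`
satisfying `ramseyProp l N`. -/
noncomputable def ramseyNumber (l : List VGraph) : ℕ :=
  sInf {N | 0 < N ∧ ramseyProp l N}

/-
A `C₄`-free graph with no independent triple has at most six vertices, and consists of two disjoint
triangles if it has six. Let the complement of a `C₄`-free graph `G` be covered by two triangle-free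
graphs `X` and `Y`. Each neighborhood of `X` or `Y` has no `G`-independent triple, so every
non-neighborhood of `G` has at most twelve vertices and is tiled by four triangles if it has
twelve. Two disjoint triangles span at most one edge between them; counting the degrees over one
tile forces `G` to be 4-regular if it has 17 vertices, which is impossible by counting paths of
length two. Hence `R(C₄, K₃, K₃) ≤ 17`.

In a four-coloring of `K₅₇` without the forbidden subgraphs, every vertex therefore has degree at
most 16 in each of the three triangle-free colors, hence degree at least 8 in the first color. Since
`57 = 8 * 7 + 1`, any two vertices then have exactly one common neighbor, which the trace argument
of the friendship theorem rules out.
-/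

section RamseyFourColors

open Finset

section TriangleTilings

variable {V : Type*} {G : SimpleGraph V}

lemma commonNeighbors_subsingleton_of_cycleGraph_four_free (hG : (cycleGraph 4).Free G) {v w : V}
    (hvw : v ≠ w) : (G.commonNeighbors v w).Subsingleton := by
  rintro x ⟨hvx, hwx⟩ y ⟨hvy, hwy⟩
  rw [mem_neighborSet] at hvx hwx hvy hwy
  by_contra hxy
  refine hG ⟨⟨⟨![v, x, w, y], fun {i j} hij => ?_⟩, fun i j hij => ?_⟩⟩
  · fin_cases i <;> fin_cases j <;>
      first | exact absurd hij (by decide) | assumption | (apply Adj.symm; assumption)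
  · have := hvx.ne
    have := hvy.ne
    have := hwx.ne
    have := hwy.ne
    fin_cases i <;> fin_cases j <;> simp_all

lemma cliqueFree_four_of_cycleGraph_four_free (hG : (cycleGraph 4).Free G) : G.CliqueFree 4 :=
  (cliqueFree_iff_top_free (β := Fin 4)).2 fun h => hG (h.mono_left le_top)

lemma subsingleton_inter_neighborSet_of_isClique (hG : (cycleGraph 4).Free G) {T : Finset V}
    (hT : G.IsClique T) (hcard : 2 < #T) {x : V} (hx : x ∉ T) :
    (↑T ∩ G.neighborSet x).Subsingleton := by
  rintro y ⟨hy, hxy⟩ z ⟨hz, hxz⟩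
  rw [mem_neighborSet] at hxy hxz
  by_contra hyz
  classical
  have hlt : #{y, z} < #T := card_le_two.trans_lt hcard
  obtain ⟨t, ht, htyz⟩ := exists_mem_notMem_of_card_lt_card hlt
  simp only [Finset.mem_insert, Finset.mem_singleton, not_or] at htyz
  have hxt : x = t := commonNeighbors_subsingleton_of_cycleGraph_four_free hG hyz
    ⟨hxy.symm, hxz.symm⟩ ⟨hT hy ht (Ne.symm htyz.1), hT hz ht (Ne.symm htyz.2)⟩
  exact hx (hxt ▸ ht)

lemma exists_isNClique_three_of_subset_neighborSet [DecidableEq V] {x : V} {A : Finset V}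
    (hA : ↑A ⊆ G.neighborSet x) (hcard : 3 ≤ #A) :
    ∃ T ⊆ insert x A, G.IsNClique 3 T ∨ Gᶜ.IsNClique 3 T := by
  obtain ⟨B, hBA, hB⟩ := exists_subset_card_eq hcard
  by_cases hind : G.IsIndepSet B
  · exact ⟨B, hBA.trans (subset_insert x A), .inr ((isNClique_compl G).2 ⟨hind, hB⟩)⟩
  · simp only [isIndepSet_iff, Set.Pairwise] at hind
    push Not at hind
    obtain ⟨a, ha, b, hb, -, hab⟩ := hind
    exact ⟨{x, a, b}, insert_subset_insert x (by grind),
      .inl (is3Clique_triple_iff.2 ⟨hA (hBA ha), hA (hBA hb), hab⟩)⟩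

lemma exists_isNClique_three_or_compl {S : Finset V} (hS : 6 ≤ #S) :
    ∃ T ⊆ S, G.IsNClique 3 T ∨ Gᶜ.IsNClique 3 T := by
  classical
  obtain ⟨x, hx⟩ : S.Nonempty := card_pos.1 (by omega)
  have hsplit := card_filter_add_card_filter_not (s := S.erase x) (G.Adj x)
  rw [card_erase_of_mem hx] at hsplit
  have hlarge : 3 ≤ #{y ∈ S.erase x | G.Adj x y} ∨ 3 ≤ #{y ∈ S.erase x | ¬G.Adj x y} := by lia
  rcases hlarge with h | h
  · obtain ⟨T, hT, hTri⟩ := exists_isNClique_three_of_subset_neighborSet (G := G) (x := x)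
      (by intro y; simp) h
    exact ⟨T, hT.trans (by grind), hTri⟩
  · obtain ⟨T, hT, hTri⟩ := exists_isNClique_three_of_subset_neighborSet (G := Gᶜ) (x := x)
      (by intro y; simp; grind) h
    rw [compl_compl] at hTri
    exact ⟨T, hT.trans (by grind), hTri.symm⟩

lemma isClique_diff_of_indepSetFreeOn_three (hG : (cycleGraph 4).Free G) {S : Set V}
    (hS : G.IndepSetFreeOn S 3) {T : Finset V} (hTS : ↑T ⊆ S) (hT : G.IsNClique 3 T) :
    G.IsClique (S \ T) := by
  classical
  rintro d ⟨hdS, hdT⟩ e ⟨heS, heT⟩ hde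
  by_contra hnadj
  have hle {x : V} (hx : x ∉ (T : Set V)) : #{t ∈ T | G.Adj x t} ≤ 1 := by
    refine card_le_one_iff_subsingleton.2 ?_
    simpa [Set.inter_def] using
      subsingleton_inter_neighborSet_of_isClique hG hT.isClique (by simp [hT.card_eq]) hx
  have hlt : #({t ∈ T | G.Adj d t} ∪ {t ∈ T | G.Adj e t}) < #T := by
    have := card_union_le {t ∈ T | G.Adj d t} {t ∈ T | G.Adj e t}
    have := hle hdT
    have := hle heT
    have := hT.card_eq
    omega
  obtain ⟨t, htT, ht⟩ := exists_mem_notMem_of_card_lt_card hlt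
  have htS := hTS htT
  have hdt : d ≠ t := fun h => hdT (h ▸ htT)
  have het : e ≠ t := fun h => heT (h ▸ htT)
  refine hS (t := {d, e, t}) ?_ ((isNClique_compl G).1 (is3Clique_triple_iff.2 ?_))
  · simp [Set.insert_subset_iff, *]
  · simp_all [compl_adj]

lemma exists_isNClique_three_and_isClique_diff (hG : (cycleGraph 4).Free G) {S : Finset V}
    (hS : G.IndepSetFreeOn S 3) (hcard : 6 ≤ #S) :
    ∃ T ⊆ S, G.IsNClique 3 T ∧ G.IsClique (S \ T : Set V) := by
  obtain ⟨T, hTS, hT | hT⟩ := exists_isNClique_three_or_compl (G := G) hcard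
  · exact ⟨T, hTS, hT, isClique_diff_of_indepSetFreeOn_three hG hS (mod_cast hTS) hT⟩
  · exact absurd ((isNClique_compl G).1 hT) (hS (mod_cast hTS))

lemma card_le_six_of_indepSetFreeOn_three (hG : (cycleGraph 4).Free G) {S : Finset V}
    (hS : G.IndepSetFreeOn S 3) : #S ≤ 6 := by
  classical
  by_contra! hcard
  obtain ⟨T, hTS, hT, hclique⟩ := exists_isNClique_three_and_isClique_diff hG hS hcard.le
  rw [← coe_sdiff] at hclique
  refine (cliqueFree_four_of_cycleGraph_four_free hG).mono ?_ _ ⟨hclique, rfl⟩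
  have := card_sdiff_add_card_eq_card hTS
  have := hT.card_eq
  omega

/-- The vertices of `S` are covered by vertex-disjoint triangles of `G` lying in `S`, encoded as a
partition of `S` into 3-cliques. -/
def HasTriangleTiling [DecidableEq V] (G : SimpleGraph V) (S : Finset V) : Prop :=
  ∃ P : Finpartition S, ∀ T ∈ P.parts, G.IsNClique 3 T

namespace HasTriangleTiling

variable [DecidableEq V]

lemma of_isNClique {T : Finset V} (hT : G.IsNClique 3 T) : HasTriangleTiling G T := by
  have hne : T ≠ ⊥ := by
    rintro rfl
    simpa using hT.card_eq
  exact ⟨.indiscrete hne, by simpa using hT⟩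

lemma union {S T : Finset V} (hS : HasTriangleTiling G S) (hT : HasTriangleTiling G T)
    (hdisj : Disjoint S T) : HasTriangleTiling G (S ∪ T) := by
  obtain ⟨P, hP⟩ := hS
  obtain ⟨Q, hQ⟩ := hT
  refine ⟨⟨P.parts ∪ Q.parts, ?_, ?_, ?_⟩, ?_⟩
  · rw [supIndep_iff_pairwiseDisjoint, coe_union, Set.pairwiseDisjoint_union]
    exact ⟨P.disjoint, Q.disjoint, fun A hA B hB _ => hdisj.mono (P.le hA) (Q.le hB)⟩
  · rw [sup_union, P.sup_parts, Q.sup_parts, sup_eq_union]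
  · simp
  · grind

lemma of_indepSetFreeOn_three (hG : (cycleGraph 4).Free G) {S : Finset V}
    (hS : G.IndepSetFreeOn S 3) (hcard : #S = 6) : HasTriangleTiling G S := by
  obtain ⟨T, hTS, hT, hclique⟩ := exists_isNClique_three_and_isClique_diff hG hS hcard.ge
  rw [← coe_sdiff] at hclique
  have hcard' : #(S \ T) = 3 := by
    have := card_sdiff_add_card_eq_card hTS
    have := hT.card_eq
    omega
  rw [← union_sdiff_of_subset hTS]
  exact (of_isNClique hT).union (of_isNClique ⟨hclique, hcard'⟩) disjoint_sdiff

lemma exists_isNClique_three {S : Finset V} (hS : HasTriangleTiling G S) (hne : S.Nonempty) :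
    ∃ T ⊆ S, G.IsNClique 3 T := by
  obtain ⟨P, hP⟩ := hS
  obtain ⟨T, hT⟩ := P.parts_nonempty hne.ne_empty
  exact ⟨T, P.subset hT, hP T hT⟩

end HasTriangleTiling

end TriangleTilings

section DegreeSum

variable {V : Type*} {G : SimpleGraph V}

lemma sum_card_filter_adj [DecidableRel G.Adj] (S T : Finset V) :
    ∑ x ∈ S, #{y ∈ T | G.Adj x y} = #(G.interedges S T) := by
  simp only [SimpleGraph.interedges, Rel.interedges, card_filter, sum_product]

lemma card_interedges_self_le [DecidableRel G.Adj] (S : Finset V) :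
    #(G.interedges S S) ≤ #S * #S - #S := by
  classical
  rw [← offDiag_card]
  refine card_le_card fun e he => ?_
  rw [SimpleGraph.mem_interedges_iff] at he
  exact mem_offDiag.2 ⟨he.1, he.2.1, he.2.2.ne⟩

lemma card_interedges_le_one_of_isClique [DecidableRel G.Adj] (hG : (cycleGraph 4).Free G)
    {S T : Finset V} (hS : G.IsClique S) (hcardS : 2 < #S) (hT : G.IsClique T) (hcardT : 2 < #T)
    (hST : Disjoint S T) : #(G.interedges S T) ≤ 1 := by
  rw [card_le_one]
  rintro ⟨x, y⟩ hxy ⟨x', y'⟩ hxy'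
  rw [SimpleGraph.mk_mem_interedges_iff] at hxy hxy'
  obtain ⟨hx, hy, hxy⟩ := hxy
  obtain ⟨hx', hy', hxy'⟩ := hxy'
  have eq_of_fst {x y y' : V} (hx : x ∈ S) (hy : y ∈ T) (hy' : y' ∈ T) (hxy : G.Adj x y)
      (hxy' : G.Adj x y') : y = y' :=
    subsingleton_inter_neighborSet_of_isClique hG hT hcardT (disjoint_left.1 hST hx)
      ⟨hy, hxy⟩ ⟨hy', hxy'⟩
  have eq_of_snd {x x' y : V} (hx : x ∈ S) (hx' : x' ∈ S) (hy : y ∈ T) (hxy : G.Adj x y)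
      (hxy' : G.Adj x' y) : x = x' :=
    subsingleton_inter_neighborSet_of_isClique hG hS hcardS (disjoint_right.1 hST hy)
      ⟨hx, hxy.symm⟩ ⟨hx', hxy'.symm⟩
  by_cases hxx' : x = x'
  · subst hxx'
    rw [eq_of_fst hx hy hy' hxy hxy']
  by_cases hyy' : y = y'
  · subst hyy'
    rw [eq_of_snd hx hx' hy hxy hxy']
  have hyx' : y = x' := commonNeighbors_subsingleton_of_cycleGraph_four_free hG
    (fun h => disjoint_left.1 hST hx (h ▸ hy') : x ≠ y')
    ⟨hxy, hT hy' hy (Ne.symm hyy')⟩ ⟨hS hx hx' hxx', hxy'.symm⟩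
  exact absurd (hyx' ▸ hy) (disjoint_left.1 hST hx')

lemma degree_eq_card_filter_neighborFinset_add [Fintype V] [DecidableEq V] [DecidableRel G.Adj]
    {v x : V} (hvx : ¬G.Adj v x) :
    G.degree x =
      #{y ∈ G.neighborFinset v | G.Adj x y} + #{y ∈ Gᶜ.neighborFinset v | G.Adj x y} := by
  have hvx' : ¬G.Adj x v := fun h => hvx h.symm
  rw [← card_neighborFinset_eq_degree, ← card_union_of_disjoint]
  · congr 1
    ext y
    by_cases hvy : v = y
    · subst hvy
      simp [hvx']
    · simp [compl_adj, hvy, ← or_and_right, em]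
  · rw [neighborFinset_compl]
    exact disjoint_filter_filter (disjoint_compl_right.mono_right sdiff_subset)

lemma card_filter_adj_neighborFinset_le_one [Fintype V] [DecidableRel G.Adj]
    (hG : (cycleGraph 4).Free G) {v x : V} (hvx : v ≠ x) :
    #{y ∈ G.neighborFinset v | G.Adj x y} ≤ 1 := by
  refine card_le_one_iff_subsingleton.2 ?_
  simpa [Set.subsingleton_coe, commonNeighbors, Set.inter_def] using
    commonNeighbors_subsingleton_of_cycleGraph_four_free hG hvx

lemma card_interedges_le_card_parts_add_five [DecidableEq V] [DecidableRel G.Adj]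
    (hG : (cycleGraph 4).Free G) {S : Finset V} {P : Finpartition S}
    (hP : ∀ T ∈ P.parts, G.IsNClique 3 T) {T : Finset V} (hT : T ∈ P.parts) :
    #(G.interedges T S) ≤ #P.parts + 5 := by
  have hself : #(G.interedges T T) ≤ 6 := by
    simpa [(hP T hT).card_eq] using card_interedges_self_le (G := G) T
  have hother : ∀ U ∈ P.parts.erase T, #(G.interedges T U) ≤ 1 := by
    intro U hU
    rw [mem_erase] at hU
    exact card_interedges_le_one_of_isClique hG (hP T hT).isClique (by simp [(hP T hT).card_eq])
      (hP U hU.2).isClique (by simp [(hP U hU.2).card_eq]) (P.disjoint hT hU.2 (Ne.symm hU.1))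
  have hsum := sum_le_card_nsmul _ _ _ hother
  have hpos : 0 < #P.parts := card_pos.2 ⟨T, hT⟩
  rw [smul_eq_mul, mul_one, card_erase_of_mem hT] at hsum
  rw [SimpleGraph.interedges, Rel.card_interedges_finpartition_right,
    ← add_sum_erase _ _ hT]
  simp only [SimpleGraph.interedges] at hself hsum
  omega

lemma HasTriangleTiling.degree_eq_and_commonNeighbors_nonempty [Fintype V] [DecidableEq V]
    [DecidableRel G.Adj] (hG : (cycleGraph 4).Free G) {d : ℕ} (hmin : ∀ x, d ≤ G.degree x)
    {v x : V} (htile : HasTriangleTiling G (Gᶜ.neighborFinset v))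
    (hcard : Gᶜ.degree v + 24 ≤ 9 * d) (hx : Gᶜ.Adj v x) :
    G.degree x = d ∧ (G.commonNeighbors v x).Nonempty := by
  obtain ⟨P, hP⟩ := htile
  obtain ⟨T, hT, hxT⟩ := P.exists_mem ((mem_neighborFinset _ _ _).2 hx)
  have hparts : #P.parts * 3 = Gᶜ.degree v := by
    rw [← card_neighborFinset_eq_degree, ← P.sum_card_parts, sum_const_nat]
    exact fun T hT => (hP T hT).card_eq
  have hcommon : ∀ y ∈ T, #{u ∈ G.neighborFinset v | G.Adj y u} ≤ 1 ∧ G.degree y =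
      #{u ∈ G.neighborFinset v | G.Adj y u} + #{u ∈ Gᶜ.neighborFinset v | G.Adj y u} := by
    intro y hy
    have hvy : Gᶜ.Adj v y := (mem_neighborFinset _ _ _).1 (P.subset hT hy)
    exact ⟨card_filter_adj_neighborFinset_le_one hG hvy.ne,
      degree_eq_card_filter_neighborFinset_add ((compl_adj _ _ _).1 hvy).2⟩
  have hge : ∀ y ∈ T, d - 1 ≤ #{u ∈ Gᶜ.neighborFinset v | G.Adj y u} := by
    intro y hy
    have := hmin y
    have := hcommon y hy
    omega
  have hsum : ∑ y ∈ T, #{u ∈ Gᶜ.neighborFinset v | G.Adj y u} ≤ ∑ _y ∈ T, (d - 1) := by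
    rw [sum_card_filter_adj, sum_const, (hP T hT).card_eq, smul_eq_mul]
    have := card_interedges_le_card_parts_add_five hG hP hT
    omega
  have heq := (sum_eq_sum_iff_of_le hge).1 ((sum_le_sum hge).antisymm hsum) x hxT
  obtain ⟨hle, hdeg⟩ := hcommon x hxT
  have hdx := hmin x
  have hpos : 0 < #{u ∈ G.neighborFinset v | G.Adj x u} := by omega
  obtain ⟨u, hu⟩ := card_pos.1 hpos
  rw [mem_filter, mem_neighborFinset] at hu
  exact ⟨by omega, u, hu⟩

end DegreeSum

section SecondNeighbors

variable {V : Type*} [Fintype V] [DecidableEq V] (G : SimpleGraph V) [DecidableRel G.Adj]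

/-- The vertices other than `v` that are reached from `v` by a walk of length two; they may be
adjacent to `v`. -/
def secondNeighborFinset (v : V) : Finset V :=
  (G.neighborFinset v).biUnion fun u => (G.neighborFinset u).erase v

variable {G} {d : ℕ} {v w : V}

lemma mem_secondNeighborFinset :
    w ∈ secondNeighborFinset G v ↔ w ≠ v ∧ (G.commonNeighbors v w).Nonempty := by
  simp only [secondNeighborFinset, mem_biUnion, mem_neighborFinset, mem_erase, Set.Nonempty,
    mem_commonNeighbors, G.adj_comm w]
  grind

lemma card_secondNeighborFinset (hG : (cycleGraph 4).Free G) (v : V) :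
    #(secondNeighborFinset G v) = ∑ u ∈ G.neighborFinset v, (G.degree u - 1) := by
  rw [secondNeighborFinset, card_biUnion]
  · refine sum_congr rfl fun u hu => ?_
    rw [card_erase_of_mem (by simpa [G.adj_comm] using hu), card_neighborFinset_eq_degree]
  · intro x hx y hy hxy
    refine Finset.disjoint_left.2 fun w hwx hwy => hxy ?_
    simp only [mem_coe, mem_neighborFinset, mem_erase] at hx hy hwx hwy
    exact commonNeighbors_subsingleton_of_cycleGraph_four_free hG (Ne.symm hwx.1)
      ⟨hx, hwx.2.symm⟩ ⟨hy, hwy.2.symm⟩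

lemma degree_mul_le_card_secondNeighborFinset (hG : (cycleGraph 4).Free G)
    (hmin : ∀ u, d + 1 ≤ G.degree u) (v : V) :
    G.degree v * d ≤ #(secondNeighborFinset G v) := by
  rw [card_secondNeighborFinset hG, ← card_neighborFinset_eq_degree, ← smul_eq_mul]
  exact card_nsmul_le_sum _ _ _ fun u _ => Nat.le_sub_one_of_lt (hmin u)

lemma secondNeighborFinset_subset_erase (v : V) : secondNeighborFinset G v ⊆ univ.erase v :=
  fun _ hw => mem_erase.2 ⟨(mem_secondNeighborFinset.1 hw).1, mem_univ _⟩

lemma secondNeighborFinset_eq_erase_iff :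
    secondNeighborFinset G v = univ.erase v ↔ ∀ w, v ≠ w → (G.commonNeighbors v w).Nonempty := by
  simp only [Finset.ext_iff, mem_secondNeighborFinset, mem_erase, mem_univ, and_true]
  grind

end SecondNeighbors

section Friendship

open Matrix

variable {V : Type*} [Fintype V] {G : SimpleGraph V} [DecidableRel G.Adj]

lemma degree_mul_lt_card_of_cycleGraph_four_free (hG : (cycleGraph 4).Free G) {d : ℕ}
    (hmin : ∀ u, d + 1 ≤ G.degree u) (v : V) : G.degree v * d < Fintype.card V := by
  classical
  calc G.degree v * d ≤ #(secondNeighborFinset G v) :=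
        degree_mul_le_card_secondNeighborFinset hG hmin v
    _ ≤ #(univ.erase v) := card_le_card (secondNeighborFinset_subset_erase v)
    _ < Fintype.card V := card_erase_lt_of_mem (mem_univ v)

lemma adjMatrix_mul_self_eq_allOnes_of_commonNeighbors_nonempty (R : Type*) [Semiring R]
    (hG : (cycleGraph 4).Free G) {k : ℕ} (hreg : G.IsRegularOfDegree k) (hk : (k : R) = 1)
    (hcommon : ∀ v w, v ≠ w → (G.commonNeighbors v w).Nonempty) :
    G.adjMatrix R * G.adjMatrix R = of fun _ _ => 1 := by
  classical
  ext v w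
  rw [of_apply]
  rcases eq_or_ne v w with rfl | hvw
  · rw [adjMatrix_mul_self_apply_self, hreg v, hk]
  · obtain ⟨u, hu⟩ := hcommon v w hvw
    have huniq : {t ∈ G.neighborFinset v | G.Adj t w} = {u} := by
      ext t
      rw [mem_filter, mem_neighborFinset, Finset.mem_singleton, G.adj_comm t]
      exact ⟨fun ht => commonNeighbors_subsingleton_of_cycleGraph_four_free hG hvw ht hu,
        fun h => h ▸ hu⟩
    rw [adjMatrix_mul_apply]
    simp only [adjMatrix_apply, sum_boole, huniq, card_singleton, Nat.cast_one]

variable [Nonempty V] {d : ℕ}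

lemma card_eq_of_isRegularOfDegree_of_commonNeighbors_nonempty (hG : (cycleGraph 4).Free G)
    (hreg : G.IsRegularOfDegree (d + 1))
    (hcommon : ∀ v w, v ≠ w → (G.commonNeighbors v w).Nonempty) :
    Fintype.card V = (d + 1) * d + 1 := by
  classical
  obtain ⟨v⟩ := ‹Nonempty V›
  have hcount := card_secondNeighborFinset hG v
  simp only [secondNeighborFinset_eq_erase_iff.2 (hcommon v), hreg.degree_eq,
    card_erase_of_mem (mem_univ v), Finset.card_univ, sum_const, card_neighborFinset_eq_degree,
    smul_eq_mul, Nat.add_sub_cancel] at hcount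
  have := Fintype.card_pos_iff.2 ⟨v⟩
  omega

/- With `A` the adjacency matrix and `J` the all-ones matrix over `ZMod p`, `p ∣ d`, the hypotheses
give `A ^ 2 = J` and `A * J = J`, so `A ^ p = J`; but `A ^ p` has trace `(tr A) ^ p = 0`, whereas
`tr J = (d + 1) * d + 1 = 1`. -/
lemma le_one_of_isRegularOfDegree_of_commonNeighbors_nonempty (hG : (cycleGraph 4).Free G)
    (hreg : G.IsRegularOfDegree (d + 1))
    (hcommon : ∀ v w, v ≠ w → (G.commonNeighbors v w).Nonempty) : d ≤ 1 := by
  classical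
  by_contra! hd
  have : Fact d.minFac.Prime := ⟨Nat.minFac_prime hd.ne'⟩
  set p := d.minFac
  have hd0 : (d : ZMod p) = 0 := (ZMod.natCast_eq_zero_iff d p).2 d.minFac_dvd
  set A := G.adjMatrix (ZMod p)
  set J : Matrix V V (ZMod p) := of fun _ _ => 1
  have hAA : A * A = J :=
    adjMatrix_mul_self_eq_allOnes_of_commonNeighbors_nonempty _ hG hreg (by simp [hd0]) hcommon
  have hAJ : A * J = J := by
    ext v w
    simp [A, J, adjMatrix_mul_apply, hreg.degree_eq, hd0]
  have hpow (m : ℕ) : A ^ (m + 2) = J := by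
    induction m with
    | zero => rw [pow_two, hAA]
    | succ m ih => rw [pow_succ', ih, hAJ]
  have hone_eq_zero : (1 : ZMod p) = 0 := calc
    (1 : ZMod p) = trace J := by
      simp [J, trace, card_eq_of_isRegularOfDegree_of_commonNeighbors_nonempty hG hreg hcommon, hd0]
    _ = trace (A ^ p) := by rw [← hpow (p - 2), Nat.sub_add_cancel (Nat.Prime.two_le Fact.out)]
    _ = trace A ^ p := ZMod.trace_pow_card A
    _ = 0 := by rw [trace_adjMatrix, zero_pow (NeZero.ne p)]
  exact one_ne_zero hone_eq_zero

lemma card_lt_of_le_degree_of_cycleGraph_four_free (hG : (cycleGraph 4).Free G) (hd : 2 ≤ d)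
    (hmin : ∀ u, d + 1 ≤ G.degree u) : (d + 1) * d + 1 < Fintype.card V := by
  classical
  by_contra! hcard
  have hreg : G.IsRegularOfDegree (d + 1) := by
    intro v
    have hlt := degree_mul_lt_card_of_cycleGraph_four_free hG hmin v
    exact (Nat.le_of_mul_le_mul_right (c := d) (by omega) (by omega)).antisymm (hmin v)
  suffices hcommon : ∀ v w, v ≠ w → (G.commonNeighbors v w).Nonempty by
    have := le_one_of_isRegularOfDegree_of_commonNeighbors_nonempty hG hreg hcommon
    omega
  intro v
  rw [← secondNeighborFinset_eq_erase_iff]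
  refine eq_of_subset_of_card_le (secondNeighborFinset_subset_erase v) ?_
  have hge := degree_mul_le_card_secondNeighborFinset hG hmin v
  rw [hreg v] at hge
  rw [card_erase_of_mem (mem_univ v), Finset.card_univ]
  omega

end Friendship

section UnionsOfGraphs

variable {V : Type*} [Fintype V] {G X Y : SimpleGraph V} [DecidableRel G.Adj] [DecidableRel X.Adj]
  [DecidableRel Y.Adj]

lemma neighborFinset_subset_union_of_le_sup [DecidableEq V] (h : G ≤ X ⊔ Y) (v : V) :
    G.neighborFinset v ⊆ X.neighborFinset v ∪ Y.neighborFinset v := by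
  intro x hx
  simp only [mem_union, mem_neighborFinset] at hx ⊢
  exact h hx

lemma degree_le_add_of_le_sup (h : G ≤ X ⊔ Y) (v : V) :
    G.degree v ≤ X.degree v + Y.degree v := by
  classical
  simp only [← card_neighborFinset_eq_degree]
  exact (card_le_card (neighborFinset_subset_union_of_le_sup h v)).trans (card_union_le _ _)

end UnionsOfGraphs

section TwoTriangleFreeGraphs

variable {V : Type*} {G X Y : SimpleGraph V}

lemma indepSetFreeOn_neighborSet (hX : X.CliqueFree 3) (hY : Y.CliqueFree 3)
    (hcover : Gᶜ ≤ X ⊔ Y) (v : V) : G.IndepSetFreeOn (X.neighborSet v) 3 := by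
  refine fun T hT hind => hY T ⟨fun x hx y hy hxy => ?_, hind.card_eq⟩
  have hXxy : ¬X.Adj x y := isIndepSet_neighborSet_of_triangleFree X hX v (hT hx) (hT hy) hxy
  exact (hcover ((compl_adj _ _ _).2 ⟨hxy, hind.isIndepSet hx hy hxy⟩)).resolve_left hXxy

variable [Fintype V]

lemma degree_le_six_of_compl_le_sup (hG : (cycleGraph 4).Free G) (hX : X.CliqueFree 3)
    (hY : Y.CliqueFree 3) (hcover : Gᶜ ≤ X ⊔ Y) [DecidableRel X.Adj] (v : V) :
    X.degree v ≤ 6 :=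
  card_le_six_of_indepSetFreeOn_three hG (S := X.neighborFinset v)
    (by simpa using indepSetFreeOn_neighborSet hX hY hcover v)

variable [DecidableEq V] [DecidableRel G.Adj]

lemma compl_degree_le_twelve (hG : (cycleGraph 4).Free G) (hX : X.CliqueFree 3)
    (hY : Y.CliqueFree 3) (hcover : Gᶜ ≤ X ⊔ Y) (v : V) : Gᶜ.degree v ≤ 12 := by
  classical
  have hle := degree_le_add_of_le_sup hcover v
  have hdegX := degree_le_six_of_compl_le_sup hG hX hY hcover v
  have hdegY := degree_le_six_of_compl_le_sup hG hY hX (sup_comm X Y ▸ hcover) v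
  omega

lemma hasTriangleTiling_compl_neighborFinset (hG : (cycleGraph 4).Free G) (hX : X.CliqueFree 3)
    (hY : Y.CliqueFree 3) (hcover : Gᶜ ≤ X ⊔ Y) {v : V} (hv : Gᶜ.degree v = 12) :
    HasTriangleTiling G (Gᶜ.neighborFinset v) := by
  classical
  have hsub := neighborFinset_subset_union_of_le_sup hcover v
  have hcoverYX : Gᶜ ≤ Y ⊔ X := sup_comm X Y ▸ hcover
  have hdegX := degree_le_six_of_compl_le_sup hG hX hY hcover v
  have hdegY := degree_le_six_of_compl_le_sup hG hY hX hcoverYX v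
  have hle := card_le_card hsub
  have hunion := card_union_add_card_inter (X.neighborFinset v) (Y.neighborFinset v)
  simp only [card_neighborFinset_eq_degree] at hle hunion
  rw [eq_of_subset_of_card_le hsub (by rw [card_neighborFinset_eq_degree]; omega)]
  refine HasTriangleTiling.union (.of_indepSetFreeOn_three hG ?_ ?_)
    (.of_indepSetFreeOn_three hG ?_ ?_) ?_
  · simpa using indepSetFreeOn_neighborSet hX hY hcover v
  · rw [card_neighborFinset_eq_degree]
    omega
  · simpa using indepSetFreeOn_neighborSet hY hX hcoverYX v
  · rw [card_neighborFinset_eq_degree]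
    omega
  · rw [disjoint_iff_inter_eq_empty, ← card_eq_zero]
    omega

end TwoTriangleFreeGraphs

section RegularGraphs

variable {V : Type*} [Fintype V] {G : SimpleGraph V} [DecidableRel G.Adj] {k : ℕ}

lemma isRegularOfDegree_of_compl_adj (hG : (cycleGraph 4).Free G)
    (hcompl : ∀ v x, G.degree v = k → Gᶜ.Adj v x → G.degree x = k) {T : Finset V}
    (hT : G.IsNClique 3 T) (hTdeg : ∀ t ∈ T, G.degree t = k) : G.IsRegularOfDegree k := by
  classical
  intro y
  by_contra hy
  refine cliqueFree_four_of_cycleGraph_four_free hG (insert y T) (hT.insert fun t ht => ?_)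
  by_contra hyt
  have hne : t ≠ y := by
    rintro rfl
    exact hy (hTdeg t ht)
  exact hy (hcompl t y (hTdeg t ht) ((compl_adj _ _ _).2 ⟨hne, fun h => hyt h.symm⟩))

lemma card_le_sq_of_isRegularOfDegree (hG : (cycleGraph 4).Free G)
    (hreg : G.IsRegularOfDegree k)
    (hcommon : ∀ v x, Gᶜ.Adj v x → (G.commonNeighbors v x).Nonempty) (htri : ¬G.CliqueFree 3) :
    Fintype.card V ≤ k ^ 2 := by
  classical
  simp only [CliqueFree, not_forall, not_not, is3Clique_iff] at htri
  obtain ⟨_, x, y, z, hxy, hxz, hyz, -⟩ := htri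
  have hsub : insert y (Gᶜ.neighborFinset x) ⊆ secondNeighborFinset G x := by
    intro w hw
    rw [mem_secondNeighborFinset]
    rcases mem_insert.1 hw with rfl | hw
    · exact ⟨hxy.ne', z, hxz, hyz⟩
    · rw [mem_neighborFinset] at hw
      exact ⟨hw.ne', hcommon x w hw⟩
  have hle := card_le_card hsub
  rw [card_insert_of_notMem (by simp [hxy]), card_neighborFinset_eq_degree, degree_compl,
    card_secondNeighborFinset hG] at hle
  simp only [hreg.degree_eq, sum_const, card_neighborFinset_eq_degree, smul_eq_mul] at hle
  rw [Nat.mul_sub_one, ← sq] at hle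
  have hk : k < Fintype.card V := hreg x ▸ G.degree_lt_card_verts x
  omega

end RegularGraphs

section RamseyBounds

variable {V : Type*} [Fintype V] {G X Y Z : SimpleGraph V}

lemma card_le_degree_add_thirteen [DecidableRel G.Adj] (hG : (cycleGraph 4).Free G)
    (hX : X.CliqueFree 3) (hY : Y.CliqueFree 3) (hcover : Gᶜ ≤ X ⊔ Y) (v : V) :
    Fintype.card V ≤ G.degree v + 13 := by
  classical
  have hle := compl_degree_le_twelve hG hX hY hcover v
  rw [degree_compl] at hle
  omega

lemma card_le_seventeen_of_compl_le_sup (hG : (cycleGraph 4).Free G) (hX : X.CliqueFree 3)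
    (hY : Y.CliqueFree 3) (hcover : Gᶜ ≤ X ⊔ Y) : Fintype.card V ≤ 17 := by
  classical
  by_contra! hlt
  have : Nonempty V := Fintype.card_pos_iff.1 (by omega)
  obtain ⟨m, hm⟩ := Nat.exists_eq_add_of_le (Nat.succ_le_of_lt hlt)
  have hmin (v : V) : m + 4 + 1 ≤ G.degree v := by
    have := card_le_degree_add_thirteen hG hX hY hcover v
    omega
  have hmoore := card_lt_of_le_degree_of_cycleGraph_four_free hG (by omega) hmin
  nlinarith

lemma exists_degree_eq_four_of_card_eq_seventeen [DecidableRel G.Adj]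
    (hG : (cycleGraph 4).Free G) (hcard : Fintype.card V = 17) (hmin : ∀ v, 4 ≤ G.degree v) :
    ∃ v, G.degree v = 4 := by
  by_contra! hne
  have hmin' (v : V) : 4 + 1 ≤ G.degree v := (hmin v).lt_of_ne' (hne v)
  obtain ⟨v⟩ : Nonempty V := Fintype.card_pos_iff.1 (by omega)
  have := degree_mul_lt_card_of_cycleGraph_four_free hG hmin' v
  have := hmin' v
  omega

theorem card_le_sixteen_of_compl_le_sup (hG : (cycleGraph 4).Free G) (hX : X.CliqueFree 3)
    (hY : Y.CliqueFree 3) (hcover : Gᶜ ≤ X ⊔ Y) : Fintype.card V ≤ 16 := by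
  classical
  by_contra! hlt
  have hcard : Fintype.card V = 17 :=
    (card_le_seventeen_of_compl_le_sup hG hX hY hcover).antisymm hlt
  have hmin (x : V) : 4 ≤ G.degree x := by
    have := card_le_degree_add_thirteen hG hX hY hcover x
    omega
  have hcompl {v : V} (hv : G.degree v = 4) : Gᶜ.degree v = 12 := by rw [degree_compl, hcard, hv]
  have htile {v : V} (hv : G.degree v = 4) : HasTriangleTiling G (Gᶜ.neighborFinset v) :=
    hasTriangleTiling_compl_neighborFinset hG hX hY hcover (hcompl hv)
  have hfour {v x : V} (hv : G.degree v = 4) (hx : Gᶜ.Adj v x) :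
      G.degree x = 4 ∧ (G.commonNeighbors v x).Nonempty :=
    (htile hv).degree_eq_and_commonNeighbors_nonempty hG hmin (by rw [hcompl hv]) hx
  obtain ⟨v, hv⟩ := exists_degree_eq_four_of_card_eq_seventeen hG hcard hmin
  obtain ⟨T, hTv, hT⟩ := (htile hv).exists_isNClique_three (by
    rw [← card_pos, card_neighborFinset_eq_degree, hcompl hv]
    norm_num)
  have hreg : G.IsRegularOfDegree 4 :=
    isRegularOfDegree_of_compl_adj hG (fun _ _ hv hx => (hfour hv hx).1) hT
      fun t ht => (hfour hv ((mem_neighborFinset _ _ _).1 (hTv ht))).1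
  have := card_le_sq_of_isRegularOfDegree hG hreg (fun v _ hx => (hfour (hreg v) hx).2)
    fun htri => htri T hT
  omega

lemma degree_le_sixteen_of_compl_le_sup [DecidableRel X.Adj] (hG : (cycleGraph 4).Free G)
    (hX : X.CliqueFree 3) (hY : Y.CliqueFree 3) (hZ : Z.CliqueFree 3) (hcover : Gᶜ ≤ X ⊔ Y ⊔ Z)
    (v : V) : X.degree v ≤ 16 := by
  classical
  rw [← card_neighborSet_eq_degree]
  refine card_le_sixteen_of_compl_le_sup (G := G.induce (X.neighborSet v))
    (X := Y.induce (X.neighborSet v)) (Y := Z.induce (X.neighborSet v))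
    (fun h => hG (h.trans ⟨Copy.induce _ _⟩)) (hY.comap ⟨Copy.induce _ _⟩)
    (hZ.comap ⟨Copy.induce _ _⟩) ?_
  intro x y hxy
  have hXxy : ¬X.Adj x y := isIndepSet_neighborSet_of_triangleFree X hX v x.2 y.2
    (Subtype.coe_ne_coe.2 hxy.ne)
  have hcompl : Gᶜ.Adj x y := by simpa [compl_adj, Subtype.ext_iff] using hxy
  simpa [hXxy] using hcover hcompl

theorem card_le_fiftySix_of_compl_le_sup (hG : (cycleGraph 4).Free G) (hX : X.CliqueFree 3)
    (hY : Y.CliqueFree 3) (hZ : Z.CliqueFree 3) (hcover : Gᶜ ≤ X ⊔ Y ⊔ Z) :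
    Fintype.card V ≤ 56 := by
  classical
  by_contra! hlt
  have : Nonempty V := Fintype.card_pos_iff.1 (by omega)
  have hdeg (v : V) : Fintype.card V ≤ G.degree v + 49 := by
    have hle := (degree_le_add_of_le_sup hcover v).trans
      (Nat.add_le_add_right (degree_le_add_of_le_sup le_rfl v) _)
    have := degree_le_sixteen_of_compl_le_sup hG hX hY hZ hcover v
    have := degree_le_sixteen_of_compl_le_sup hG hY hX hZ (by rwa [sup_comm Y]) v
    have := degree_le_sixteen_of_compl_le_sup hG hZ hX hY (by rwa [sup_assoc, sup_comm]) v
    rw [degree_compl] at hle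
    omega
  obtain ⟨m, hm⟩ := Nat.exists_eq_add_of_le (Nat.succ_le_of_lt hlt)
  have hmin (v : V) : m + 7 + 1 ≤ G.degree v := by
    have := hdeg v
    omega
  have hmoore := card_lt_of_le_degree_of_cycleGraph_four_free hG (by omega) hmin
  nlinarith

end RamseyBounds

section Colorings

variable {V ι : Type*} {c : Sym2 V → ι} {i : ι}

/-- The graph of the edges of color `i` in the edge coloring `c` of the complete graph on `V`;
the values of `c` on the diagonal are ignored. -/
def colorGraph (c : Sym2 V → ι) (i : ι) : SimpleGraph V :=
  fromEdgeSet (c ⁻¹' {i})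

lemma colorGraph_adj {u v : V} : (colorGraph c i).Adj u v ↔ c s(u, v) = i ∧ u ≠ v := by
  simp [colorGraph]

lemma isContained_colorGraph_iff {W : Type*} {H : SimpleGraph W} :
    H ⊑ colorGraph c i ↔ ∃ f : W ↪ V, ∀ u v, H.Adj u v → c s(f u, f v) = i := by
  constructor
  · rintro ⟨f⟩
    exact ⟨f.toEmbedding, fun u v huv => (colorGraph_adj.1 (f.toHom.map_adj huv)).1⟩
  · rintro ⟨f, hf⟩
    exact ⟨⟨⟨f, fun huv => colorGraph_adj.2 ⟨hf _ _ huv, f.injective.ne huv.ne⟩⟩, f.injective⟩⟩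

lemma compl_colorGraph_zero_le (c : Sym2 V → Fin 4) :
    (colorGraph c 0)ᶜ ≤ colorGraph c 1 ⊔ colorGraph c 2 ⊔ colorGraph c 3 := by
  intro u v huv
  simp only [compl_adj, sup_adj, colorGraph_adj] at huv ⊢
  lia

lemma ramseyProp_iff_isContained (l : List VGraph) (N : ℕ) :
    ramseyProp l N ↔ ∀ c : Sym2 (Fin N) → Fin l.length, ∃ i, (l.get i).G ⊑ colorGraph c i := by
  simp only [ramseyProp, isContained_colorGraph_iff]

end Colorings

end RamseyFourColors

/-- `R(C₄, K₃, K₃, K₃) ≤ 57`. -/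
theorem statement14 : ramseyNumber [C4, Kc 3, Kc 3, Kc 3] ≤ 57 := by
  refine Nat.sInf_le ⟨by norm_num, (ramseyProp_iff_isContained _ _).2 fun c => ?_⟩
  by_contra hfree
  rw [not_exists] at hfree
  have hC4 : (cycleGraph 4).Free (colorGraph c 0) := hfree 0
  have hK3 (i : Fin 3) : (colorGraph c i.succ).CliqueFree 3 :=
    (cliqueFree_iff_top_free (β := Fin 3)).2 (by fin_cases i; exacts [hfree 1, hfree 2, hfree 3])
  have hcard := card_le_fiftySix_of_compl_le_sup hC4 (hK3 0) (hK3 1) (hK3 2)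
    (compl_colorGraph_zero_le c)
  simp at hcard
end

section
/- The two-color Ramsey number satisfies R(C_4, B_{17}) ≤ 28; that is, every red/blue coloring of the edges of the complete graph on 28 vertices contains a red cycle of length 4 or a blue copy of the book B_{17}. -/
open SimpleGraph

open Finset

/-!
Let `G` be a `C₄`-free graph on `n = m² + m - 2` vertices in which any two nonadjacent vertices have
at least `2m` neighbours between them, as happens when the complement of `G` contains no book with
`m² - m - 3` pages. Distinct vertices have at most one common neighbour, so counting paths of length
two gives `∑ d(w)(d(w) - 1) ≤ n(n - 1)`, slightly less than `n·m(m + 1)`. Let `ℓ` be the number of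
vertices of degree at most `m`. Nonadjacent vertices of this kind have no common neighbour and no
vertex is adjacent to more than two of them, so the count improves to
`∑ d(w)(d(w) - 1) ≤ n(n - 1) - ℓ(ℓ - 3)`. If all degrees are at least `m`, the left side is at least
`n·m(m + 1) - 2mℓ`, and the resulting quadratic inequality in `ℓ` has no solution. A vertex of
degree at most `m - 2` forces degree at least `m + 2` on its nonneighbours, too much for the first
count. A vertex of degree `m - 1` is adjacent to every other vertex of degree at most `m`, so
`ℓ ≤ 3` and the remaining degrees are again too large.
-/

section PathCounting

variable {V : Type*} [Fintype V] [DecidableEq V] (G : SimpleGraph V) [DecidableRel G.Adj]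

/-- The number of common neighbours of two vertices; `codegree G v v` is the degree of `v`. -/
def codegree (u v : V) : ℕ := #(G.neighborFinset u ∩ G.neighborFinset v)

theorem sum_codegree_erase (u : V) :
    ∑ v ∈ univ.erase u, codegree G u v = ∑ w ∈ G.neighborFinset u, (G.degree w - 1) := by
  have hAbove (v : V) :
      (G.neighborFinset u).bipartiteAbove G.Adj v = G.neighborFinset u ∩ G.neighborFinset v := by
    ext; simp [mem_bipartiteAbove]
  have hBelow (w : V) : (univ.erase u).bipartiteBelow G.Adj w = (G.neighborFinset w).erase u := by
    ext; simp [mem_bipartiteBelow, G.adj_comm w]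
  simp only [codegree, ← hAbove, sum_card_bipartiteAbove_eq_sum_card_bipartiteBelow]
  refine sum_congr rfl fun w hw ↦ ?_
  rw [hBelow, card_erase_of_mem (by simpa [G.adj_comm] using hw), card_neighborFinset_eq_degree]

theorem sum_sum_codegree_erase :
    ∑ u, ∑ v ∈ univ.erase u, codegree G u v = ∑ w, G.degree w * (G.degree w - 1) := by
  simp only [sum_codegree_erase]
  rw [sum_comm' (t' := univ) (s' := fun w ↦ G.neighborFinset w) (by simp [G.adj_comm])]
  simp only [sum_const, card_neighborFinset_eq_degree, smul_eq_mul]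

end PathCounting

section FourCycleFree

variable {V : Type*} {G : SimpleGraph V}

theorem cycleGraph_four_isContained {u v a b : V} (huv : u ≠ v) (hab : a ≠ b)
    (hua : G.Adj u a) (hva : G.Adj v a) (hub : G.Adj u b) (hvb : G.Adj v b) :
    cycleGraph 4 ⊑ G := by
  let p : G.Walk u u := .cons hua (.cons hva.symm (.cons hvb (.cons hub.symm .nil)))
  refine (cycleGraph_isContained_iff (by norm_num)).2 ⟨u, p, ?_, rfl⟩
  simp only [p, Walk.cons_isCycle_iff, Walk.cons_isPath_iff, Walk.IsPath.nil, Walk.support_cons,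
    Walk.support_nil, Walk.edges_cons, Walk.edges_nil]
  grind [hua.ne, hva.ne, hub.ne, hvb.ne]

variable [Fintype V] [DecidableRel G.Adj]

section Codegree

variable [DecidableEq V]

theorem codegree_le_one (hG : (cycleGraph 4).Free G) {u v : V} (huv : u ≠ v) :
    codegree G u v ≤ 1 := by
  by_contra! h
  obtain ⟨a, ha, b, hb, hab⟩ := one_lt_card.1 h
  simp only [mem_inter, mem_neighborFinset] at ha hb
  exact hG (cycleGraph_four_isContained huv hab ha.1 ha.2 hb.1 hb.2)

theorem sum_codegree_erase_add_card_lt (hG : (cycleGraph 4).Free G) {u : V} {S : Finset V}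
    (hu : u ∉ S) (hS : ∀ v ∈ S, codegree G u v = 0) :
    ∑ v ∈ univ.erase u, codegree G u v + #S < Fintype.card V := by
  have hsub : S ⊆ univ.erase u := fun v hv ↦ by simp [ne_of_mem_of_not_mem hv hu]
  calc ∑ v ∈ univ.erase u, codegree G u v + #S
      = ∑ v ∈ univ.erase u \ S, codegree G u v + #S := by
        rw [← sum_sdiff hsub, sum_eq_zero hS, add_zero]
    _ ≤ #(univ.erase u \ S) + #S := by
        gcongr
        refine (sum_le_card_nsmul _ _ 1 fun v hv ↦ ?_).trans_eq (nsmul_one _)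
        exact codegree_le_one hG (ne_of_mem_erase (mem_sdiff.1 hv).1).symm
    _ = #(univ.erase u) := card_sdiff_add_card_eq_card hsub
    _ < Fintype.card V := card_erase_lt_of_mem (mem_univ u)

theorem sum_codegree_erase_lt_card (hG : (cycleGraph 4).Free G) (u : V) :
    ∑ v ∈ univ.erase u, codegree G u v < Fintype.card V := by
  simpa using sum_codegree_erase_add_card_lt hG (notMem_empty u) (by simp)

end Codegree

theorem sum_degree_mul_pred_le (hG : (cycleGraph 4).Free G) :
    ∑ w, G.degree w * (G.degree w - 1) ≤ Fintype.card V * (Fintype.card V - 1) := by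
  classical
  rw [← sum_sum_codegree_erase, ← smul_eq_mul, ← card_univ]
  exact sum_le_card_nsmul _ _ _ fun u _ ↦ Nat.le_sub_one_of_lt (sum_codegree_erase_lt_card hG u)

end FourCycleFree

section LowDegree

variable {V : Type*} [Fintype V] (G : SimpleGraph V) [DecidableRel G.Adj]

/-- The set of vertices of degree at most `m`. -/
def lowDegree (m : ℕ) : Finset V := {v | G.degree v ≤ m}

variable {G} {m : ℕ}

theorem mem_lowDegree {v : V} : v ∈ lowDegree G m ↔ G.degree v ≤ m := by
  simp [lowDegree]

theorem card_mul_le_sum_degree_mul_pred {r : ℕ} {S : Finset V} (hS : ∀ v ∈ S, r ≤ G.degree v) :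
    #S * (r * (r - 1)) ≤ ∑ v ∈ S, G.degree v * (G.degree v - 1) := by
  rw [← smul_eq_mul]
  refine card_nsmul_le_sum _ _ _ fun v hv ↦ ?_
  have := hS v hv
  gcongr

theorem card_mul_le_sum_degree_mul_pred_add (hdeg : ∀ v, m ≤ G.degree v) :
    Fintype.card V * (m * (m + 1)) ≤
      ∑ v, G.degree v * (G.degree v - 1) + 2 * m * #(lowDegree G m) := by
  classical
  have hlow := card_mul_le_sum_degree_mul_pred (S := lowDegree G m) fun v _ ↦ hdeg v
  have hhigh := card_mul_le_sum_degree_mul_pred (r := m + 1) (S := (lowDegree G m)ᶜ) fun v hv ↦ by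
    simpa [mem_lowDegree] using hv
  have hpred : m * (m + 1) = m * (m - 1) + 2 * m := by cases m <;> grind
  rw [← sum_add_sum_compl (lowDegree G m), ← card_add_card_compl (lowDegree G m),
    add_mul]
  rw [add_tsub_cancel_right, mul_comm (m + 1)] at hhigh
  nth_rw 1 [hpred]
  linarith

end LowDegree

section NeighborhoodUnion

variable {V : Type*} [Fintype V] [DecidableEq V] (G : SimpleGraph V) [DecidableRel G.Adj]

/-- The neighbourhood union condition: any two nonadjacent vertices have at least `s` neighbours
between them. -/
def NeighborhoodUnionCondition (s : ℕ) : Prop :=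
  ∀ ⦃u v⦄, Gᶜ.Adj u v → s ≤ #(G.neighborFinset u ∪ G.neighborFinset v)

namespace NeighborhoodUnionCondition

variable {G} {m : ℕ} {u v w : V}

theorem add_codegree_le {s : ℕ} (hG : NeighborhoodUnionCondition G s) (huv : Gᶜ.Adj u v) :
    s + codegree G u v ≤ G.degree u + G.degree v := by
  have hunion := hG huv
  have := card_union_add_card_inter (G.neighborFinset u) (G.neighborFinset v)
  simp only [card_neighborFinset_eq_degree] at this
  unfold codegree
  omega

theorem codegree_eq_zero (hG : NeighborhoodUnionCondition G (2 * m)) (huv : Gᶜ.Adj u v)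
    (hu : u ∈ lowDegree G m) (hv : v ∈ lowDegree G m) : codegree G u v = 0 := by
  have := hG.add_codegree_le huv
  rw [mem_lowDegree] at hu hv
  omega

theorem adj_of_mem_neighborFinset (hG : NeighborhoodUnionCondition G (2 * m)) (huv : u ≠ v)
    (hu : u ∈ G.neighborFinset w ∩ lowDegree G m) (hv : v ∈ G.neighborFinset w ∩ lowDegree G m) :
    G.Adj u v := by
  simp only [mem_inter, mem_neighborFinset] at hu hv
  by_contra hnadj
  have hzero := hG.codegree_eq_zero ((compl_adj ..).2 ⟨huv, hnadj⟩) hu.2 hv.2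
  have hpos : 0 < codegree G u v := card_pos.2 ⟨w, by simp [hu.1.symm, hv.1.symm]⟩
  omega

theorem card_neighborFinset_inter_lowDegree_le_two (hfree : (cycleGraph 4).Free G)
    (hG : NeighborhoodUnionCondition G (2 * m)) (w : V) :
    #(G.neighborFinset w ∩ lowDegree G m) ≤ 2 := by
  by_contra! h
  obtain ⟨a, ha, b, hb, c, hc, hab, hac, hbc⟩ := two_lt_card.1 h
  have hAdjB := hG.adj_of_mem_neighborFinset hab ha hb
  have hAdjC := hG.adj_of_mem_neighborFinset hac ha hc
  simp only [mem_inter, mem_neighborFinset] at ha hb hc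
  exact hfree (cycleGraph_four_isContained ha.1.ne hbc hb.1 hAdjB hc.1 hAdjC)

theorem sum_codegree_erase_add_card_lowDegree_lt (hfree : (cycleGraph 4).Free G)
    (hG : NeighborhoodUnionCondition G (2 * m)) (hu : u ∈ lowDegree G m) :
    ∑ v ∈ univ.erase u, codegree G u v + #(lowDegree G m) < Fintype.card V + 3 := by
  set A := insert u (G.neighborFinset u ∩ lowDegree G m)
  have hcardA : #A ≤ 3 := (card_insert_le _ _).trans <|
    Nat.succ_le_succ (hG.card_neighborFinset_inter_lowDegree_le_two hfree u)
  have hcount : ∑ v ∈ univ.erase u, codegree G u v + #(lowDegree G m \ A) < Fintype.card V := by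
    refine sum_codegree_erase_add_card_lt hfree (by simp [A]) fun v hv ↦ ?_
    have hv' : v ∈ lowDegree G m ∧ v ≠ u ∧ ¬ G.Adj u v := by
      simp only [A, mem_sdiff, mem_insert, mem_inter, mem_neighborFinset] at hv
      tauto
    exact hG.codegree_eq_zero ((compl_adj ..).2 ⟨hv'.2.1.symm, hv'.2.2⟩) hu hv'.1
  have := le_card_sdiff A (lowDegree G m)
  omega

theorem sum_degree_mul_pred_add_le (hfree : (cycleGraph 4).Free G)
    (hG : NeighborhoodUnionCondition G (2 * m)) :
    ∑ w, G.degree w * (G.degree w - 1) + #(lowDegree G m) ^ 2 + Fintype.card V ≤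
      Fintype.card V ^ 2 + 3 * #(lowDegree G m) := by
  set L := lowDegree G m
  have hrow (u : V) : ∑ v ∈ univ.erase u, codegree G u v + (if u ∈ L then #L else 0) + 1 ≤
      Fintype.card V + (if u ∈ L then 3 else 0) := by
    split_ifs with hu
    · exact hG.sum_codegree_erase_add_card_lowDegree_lt hfree hu
    · exact sum_codegree_erase_lt_card hfree u
  have := sum_le_sum fun u (_ : u ∈ univ) ↦ hrow u
  simp only [sum_add_distrib, sum_sum_codegree_erase, sum_ite_mem, univ_inter, sum_const, card_univ,
    smul_eq_mul, mul_one] at this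
  linarith

theorem card_lowDegree_le_three (hfree : (cycleGraph 4).Free G)
    (hG : NeighborhoodUnionCondition G (2 * m)) (hv : G.degree v < m) : #(lowDegree G m) ≤ 3 := by
  have hsub : lowDegree G m ⊆ insert v (G.neighborFinset v ∩ lowDegree G m) := by
    intro u hu
    have hadj : u ≠ v → G.Adj v u := by
      intro huv
      by_contra hnadj
      have := hG.add_codegree_le ((compl_adj ..).2 ⟨huv.symm, hnadj⟩)
      have := mem_lowDegree.1 hu
      omega
    simp only [mem_insert, mem_inter, mem_neighborFinset, hu, and_true]
    tauto
  exact (card_le_card hsub).trans <| (card_insert_le _ _).trans <|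
    Nat.succ_le_succ (hG.card_neighborFinset_inter_lowDegree_le_two hfree v)

theorem exists_degree_lt (hm : 3 ≤ m) (hn : Fintype.card V + 2 = m ^ 2 + m)
    (hfree : (cycleGraph 4).Free G) (hG : NeighborhoodUnionCondition G (2 * m)) :
    ∃ v, G.degree v < m := by
  by_contra! hdeg
  have hlower := card_mul_le_sum_degree_mul_pred_add hdeg
  have hupper := hG.sum_degree_mul_pred_add_le hfree
  set l := #(lowDegree G m)
  have hquad : l ^ 2 + 3 * Fintype.card V ≤ (2 * m + 3) * l := by nlinarith
  have hdiscr : (2 * m + 3) ^ 2 < 12 * Fintype.card V := by nlinarith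
  zify at hquad hdiscr
  nlinarith [sq_nonneg (2 * (l : ℤ) - (2 * m + 3))]

theorem le_degree_add_one (hn : Fintype.card V + 2 = m ^ 2 + m)
    (hfree : (cycleGraph 4).Free G) (hG : NeighborhoodUnionCondition G (2 * m)) (v : V) :
    m ≤ G.degree v + 1 := by
  by_contra! hv
  obtain ⟨k, rfl⟩ := Nat.exists_eq_add_of_le' (show 2 ≤ m by omega)
  set S := (insert v (G.neighborFinset v))ᶜ
  have hcardS : Fintype.card V ≤ #S + (k + 1) := by
    have : #(insert v (G.neighborFinset v)) + #S = Fintype.card V := card_add_card_compl _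
    have := card_insert_le v (G.neighborFinset v)
    rw [card_neighborFinset_eq_degree] at this
    omega
  have hdegS : ∀ u ∈ S, k + 4 ≤ G.degree u := by
    intro u hu
    simp only [S, mem_compl, mem_insert, mem_neighborFinset, not_or] at hu
    have := hG.add_codegree_le ((compl_adj ..).2 ⟨Ne.symm hu.1, hu.2⟩)
    omega
  have hlower := (card_mul_le_sum_degree_mul_pred hdegS).trans
    (sum_le_univ_sum_of_nonneg fun _ ↦ Nat.zero_le _)
  have hupper := sum_degree_mul_pred_le hfree
  have hcard : Fintype.card V = k ^ 2 + 5 * k + 4 := by linarith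
  have hcardS' : k ^ 2 + 4 * k + 3 ≤ #S := by linarith
  rw [hcard, show k ^ 2 + 5 * k + 4 - 1 = k ^ 2 + 5 * k + 3 by omega] at hupper
  rw [show k + 4 - 1 = k + 3 by omega] at hlower
  nlinarith [Nat.mul_le_mul_right ((k + 4) * (k + 3)) hcardS']

theorem le_degree (hm : 5 ≤ m) (hn : Fintype.card V + 2 = m ^ 2 + m)
    (hfree : (cycleGraph 4).Free G) (hG : NeighborhoodUnionCondition G (2 * m)) (v : V) :
    m ≤ G.degree v := by
  by_contra! hv
  obtain ⟨k, rfl⟩ := Nat.exists_eq_add_of_le' hm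
  set L := lowDegree G (k + 5)
  have hdegv : G.degree v = k + 4 := by
    have := hG.le_degree_add_one hn hfree v
    omega
  have hlow : (k + 4) * (k + 3) ≤ ∑ w ∈ L, G.degree w * (G.degree w - 1) := by
    refine (Eq.le ?_).trans (single_le_sum (fun _ _ ↦ Nat.zero_le _) (mem_lowDegree.2 hv.le))
    rw [hdegv, show k + 4 - 1 = k + 3 by omega]
  have hhigh := card_mul_le_sum_degree_mul_pred (G := G) (r := k + 6) (S := Lᶜ) fun w hw ↦ by
    exact Nat.succ_le_of_lt (by simpa [L, mem_lowDegree] using hw)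
  have hcardL : #L ≤ 3 := hG.card_lowDegree_le_three hfree hv
  have hcard : Fintype.card V = k ^ 2 + 11 * k + 28 := by linarith
  have hcardL' : k ^ 2 + 11 * k + 25 ≤ #Lᶜ := by
    have := card_add_card_compl L
    omega
  have hupper := sum_degree_mul_pred_le hfree
  rw [← sum_add_sum_compl L, hcard, show k ^ 2 + 11 * k + 28 - 1 = k ^ 2 + 11 * k + 27 by omega]
    at hupper
  rw [show k + 6 - 1 = k + 5 by omega] at hhigh
  nlinarith [Nat.mul_le_mul_right ((k + 6) * (k + 5)) hcardL']

theorem cycleGraph_four_isContained (hm : 5 ≤ m) (hn : Fintype.card V + 2 = m ^ 2 + m)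
    (hG : NeighborhoodUnionCondition G (2 * m)) : cycleGraph 4 ⊑ G := by
  by_contra hfree
  obtain ⟨v, hv⟩ := hG.exists_degree_lt (by omega) hn hfree
  exact hv.not_ge (hG.le_degree hm hn hfree v)

end NeighborhoodUnionCondition

end NeighborhoodUnion

section Book

variable {V : Type*} [Fintype V] [DecidableEq V] {G : SimpleGraph V} [DecidableRel G.Adj] {k : ℕ}

theorem bookGraph_isContained {u v : V} (huv : G.Adj u v) (hk : k ≤ codegree G u v) :
    bookGraph k ⊑ G := by
  obtain ⟨page⟩ : Nonempty (Fin k ↪ ↥(G.neighborFinset u ∩ G.neighborFinset v)) :=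
    Function.Embedding.nonempty_of_card_le (by rwa [Fintype.card_fin, Fintype.card_coe])
  have hpage (i : Fin k) : G.Adj u (page i) ∧ G.Adj v (page i) := by
    simpa only [mem_inter, mem_neighborFinset] using (page i).2
  let f : Fin (k + 2) → V := Fin.cons u (Fin.cons v fun i ↦ page i)
  have hinj : Function.Injective f := by
    refine Fin.cons_injective_iff.2 ⟨?_, Fin.cons_injective_iff.2
      ⟨?_, Subtype.val_injective.comp page.injective⟩⟩
    · rintro ⟨i, hi⟩
      cases i using Fin.cases with
      | zero => exact huv.ne' hi
      | succ i => exact (hpage i).1.ne' hi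
    · rintro ⟨i, hi⟩
      exact (hpage i).2.ne' hi
  have hspine (x y : Fin (k + 2)) (hxy : x ≠ y) (hx : x.val < 2) : G.Adj (f x) (f y) := by
    cases x using Fin.cases with
    | zero =>
      cases y using Fin.cases with
      | zero => exact absurd rfl hxy
      | succ y =>
        cases y using Fin.cases with
        | zero => exact huv
        | succ i => exact (hpage i).1
    | succ x =>
      obtain rfl : x = 0 := by ext; simpa using hx
      cases y using Fin.cases with
      | zero => exact huv.symm
      | succ y =>
        cases y using Fin.cases with
        | zero => exact absurd rfl hxy
        | succ i => exact (hpage i).2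
  refine ⟨⟨f, fun {x y} hxy ↦ ?_⟩, hinj⟩
  obtain ⟨hne, hx | hy⟩ := (fromRel_adj ..).1 hxy
  · exact hspine x y hne hx
  · exact (hspine y x hne.symm hy).symm

theorem codegree_compl_add_card_union {u v : V} (huv : Gᶜ.Adj u v) :
    codegree Gᶜ u v + #(G.neighborFinset u ∪ G.neighborFinset v) + 2 = Fintype.card V := by
  set U := G.neighborFinset u ∪ G.neighborFinset v
  have hcompl : Gᶜ.neighborFinset u ∩ Gᶜ.neighborFinset v = (insert u (insert v U))ᶜ := by
    ext w
    simp only [U, mem_inter, mem_neighborFinset, compl_adj, mem_compl, mem_insert, mem_union]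
    grind
  have hv : v ∉ U := by simpa [U, G.adj_comm] using huv.2
  have hu : u ∉ insert v U := by simpa [U, huv.ne, G.adj_comm] using huv.2
  have := card_add_card_compl (insert u (insert v U))
  rw [card_insert_of_notMem hu, card_insert_of_notMem hv] at this
  rw [codegree, hcompl]
  omega

theorem neighborhoodUnionCondition_of_bookGraph_free_compl {s : ℕ}
    (hs : s + k + 1 ≤ Fintype.card V) (hG : (bookGraph k).Free Gᶜ) :
    NeighborhoodUnionCondition G s := by
  intro u v huv
  by_contra! hlt
  refine hG (bookGraph_isContained huv ?_)
  have := codegree_compl_add_card_union huv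
  omega

end Book

section Ramsey

theorem ramseyProp_pair {X Y : VGraph} {N : ℕ}
    (h : ∀ G : SimpleGraph (Fin N), X.G ⊑ G ∨ Y.G ⊑ Gᶜ) : ramseyProp [X, Y] N := by
  intro c
  let G : SimpleGraph (Fin N) := fromRel fun u v ↦ c s(u, v) = (0 : Fin 2)
  have hG (u v : Fin N) : G.Adj u v ↔ u ≠ v ∧ c s(u, v) = (0 : Fin 2) := by
    rw [fromRel_adj, Sym2.eq_swap (a := v), or_self]
  obtain ⟨⟨f⟩⟩ | ⟨⟨f⟩⟩ := h G
  · exact ⟨(0 : Fin 2), f.toEmbedding, fun u v huv ↦ ((hG _ _).1 (f.toHom.map_adj huv)).2⟩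
  · refine ⟨(1 : Fin 2), f.toEmbedding, fun u v huv ↦ ?_⟩
    obtain ⟨hne, hnadj⟩ := (compl_adj ..).1 (f.toHom.map_adj huv)
    exact Fin.eq_one_of_ne_zero _ fun hzero ↦ hnadj ((hG _ _).2 ⟨hne, hzero⟩)

theorem ramseyProp_C4_bookGraph {m n k : ℕ} (hm : 5 ≤ m) (hn : n + 2 = m ^ 2 + m)
    (hk : k + 3 + m = m ^ 2) : ramseyProp [C4, ⟨Fin (k + 2), bookGraph k⟩] n := by
  classical
  refine ramseyProp_pair fun G ↦ or_iff_not_imp_right.2 fun hbook ↦ ?_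
  have hG : NeighborhoodUnionCondition G (2 * m) :=
    neighborhoodUnionCondition_of_bookGraph_free_compl (by rw [Fintype.card_fin]; omega) hbook
  exact hG.cycleGraph_four_isContained hm (by rwa [Fintype.card_fin])

end Ramsey

theorem statement17_general {m n k : ℕ} (hm : 5 ≤ m) (hn : n + 2 = m ^ 2 + m)
    (hk : k + 3 + m = m ^ 2) : ramseyNumber [C4, ⟨Fin (k + 2), bookGraph k⟩] ≤ n :=
  Nat.sInf_le ⟨by nlinarith, ramseyProp_C4_bookGraph hm hn hk⟩

/-- `R(C₄, B₁₇) ≤ 28`. -/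
theorem statement17 : ramseyNumber [C4, ⟨Fin 19, bookGraph 17⟩] ≤ 28 :=
  statement17_general (m := 5) le_rfl rfl rfl
end
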